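/- arXiv:2008.00788 — 2 statements merged into one kernel-verified Lean document; each statement's English description precedes it below -/
import Mathlib

section
/- Let M ≥ 0 and let u ∈ D_M with Δu = f. Then Σ_{p ∈ V_M} (du)(p) = ∫_{Σ_N^+} f dμ. -/
open Filter Topology MeasureTheory Finset Classical

noncomputable section

/-- The one-sided full shift space `Σ_N^+` on `N` symbols; coordinates are indexed
from `0`, so the paper's `x_1 x_2 ⋯` is `x 0, x 1, ⋯` here. It carries the product
of the discrete topology on `Fin N`. -/
abbrev SSp (N : ℕ) : Type := ℕ → Fin N

/-- The level-`m` vertex set `V_m = {p : p_i = p_{i+1} for all i ≥ m+1}` (1-based),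
i.e. the sequences that are constant from (0-based) coordinate `m` on.  It is
realized as a `Finset` via the parametrization by the first `m+1` coordinates;
see `mem_V` for the defining property. -/
noncomputable def V (N m : ℕ) : Finset (SSp N) :=
  (Finset.univ : Finset (Fin (m + 1) → Fin N)).image
    (fun w j => w ⟨min j m, by omega⟩)

lemma const_from (N m : ℕ) (p : SSp N) (h : ∀ i, m ≤ i → p i = p (i + 1)) :
    ∀ j, m ≤ j → p j = p m := by
  intro j hj
  induction j with
  | zero => have : m = 0 := by omega
            simp [this]
  | succ k ih =>
      rcases Nat.lt_or_ge k m with hk | hk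
      · have : m = k + 1 := by omega
        simp [this]
      · rw [← h k hk]
        exact ih hk

/-- Membership in `V N m` is exactly the paper's condition
`p_i = p_{i+1}` for all `i ≥ m+1` (1-based), i.e. `p i = p (i+1)` for all `i ≥ m`. -/
lemma mem_V {N m : ℕ} {p : SSp N} :
    p ∈ V N m ↔ ∀ i, m ≤ i → p i = p (i + 1) := by
  classical
  constructor
  · intro hp i hi
    simp only [V, Finset.mem_image] at hp
    obtain ⟨w, -, rfl⟩ := hp
    have h1 : min i m = m := by omega
    have h2 : min (i + 1) m = m := by omega
    simp [h1, h2]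
  · intro h
    simp only [V, Finset.mem_image]
    refine ⟨fun j => p j, Finset.mem_univ _, ?_⟩
    funext j
    rcases Nat.lt_or_ge j m with hj | hj
    · have : min j m = j := by omega
      simp [this]
    · have : min j m = m := by omega
      simp only [this]
      exact (const_from N m p h j hj).symm

/-- The deleted neighbourhood `U_{p,m} = {q ∈ V_m : q ≠ p, q_i = p_i for 1 ≤ i ≤ m}`
(1-based), i.e. `q` agrees with `p` on the first `m` (0-based: `i < m`) coordinates. -/
noncomputable def U (N m : ℕ) (p : SSp N) : Finset (SSp N) :=
  (V N m).filter (fun q => q ≠ p ∧ ∀ i, i < m → q i = p i)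

/-- `κ_p = min {j : p ∈ V_j}`. -/
noncomputable def kappa (N : ℕ) (p : SSp N) : ℕ := sInf {j | p ∈ V N j}

/-- The difference operator
`H_m u (p) = Σ_{i = κ_p}^{m} Σ_{q ∈ U_{p,i}} (u(q) − u(p))`. -/
noncomputable def H (N m : ℕ) (u : SSp N → ℝ) (p : SSp N) : ℝ :=
  ∑ i ∈ Finset.Icc (kappa N p) m, ∑ q ∈ U N i p, (u q - u p)

/-- The Dirichlet form `E_{H_m}(u, v) = − Σ_{p ∈ V_m} u(p) · H_m v(p)`. -/
noncomputable def EH (N m : ℕ) (u v : SSp N → ℝ) : ℝ :=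
  -∑ p ∈ V N m, u p * H N m v p

/-- The cylinder set `[p_1 ⋯ p_m]`, determined by the first `m` coordinates of `p`. -/
def cyl (N m : ℕ) (p : SSp N) : Set (SSp N) := {x | ∀ i, i < m → x i = p i}

/-- `χ_p^m` : the indicator function of the cylinder set `[p_1 ⋯ p_{m+1}]`. -/
noncomputable def chi (N m : ℕ) (p : SSp N) : SSp N → ℝ :=
  (cyl N (m + 1) p).indicator 1

/-- `u ∈ dom E`: `u` is continuous and the energy
`E(u) = lim_m E_{H_m}(u|_{V_m})` exists (and is finite). -/
def MemDomE (N : ℕ) (u : SSp N → ℝ) : Prop :=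
  Continuous u ∧ ∃ L : ℝ, Tendsto (fun m => EH N m u u) atTop (nhds L)

/-- `v ∈ dom_M E`: `v` has finite energy and vanishes on the boundary `V_M`. -/
def MemDomME (N M : ℕ) (v : SSp N → ℝ) : Prop :=
  MemDomE N v ∧ ∀ p ∈ V N M, v p = 0

/-- `u ∈ 𝒟_M` with `Δ u = f` (strong formulation with boundary `V_M`):
`u` and `f` are continuous and
`lim_{m → ∞} max_{p ∈ V_m ∖ V_M} |N^{m+1} H_m u(p) − f(p)| = 0`. -/
def IsLaplacianOn (N M : ℕ) (u f : SSp N → ℝ) : Prop :=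
  Continuous u ∧ Continuous f ∧
    ∀ ε : ℝ, 0 < ε → ∃ m₀ : ℕ, ∀ m, m₀ ≤ m → ∀ p ∈ V N m, p ∉ V N M →
      |(N : ℝ) ^ (m + 1) * H N m u p - f p| < ε

/-- `u ∈ D_μ` with `Δ u = f` (original definition of the Laplacian):
`u` and `f` are continuous and
`lim_{m → ∞} max_{p ∈ V_m ∖ V_{m−1}} |N^{m+1} H_m u(p) − f(p)| = 0`
(the level is written `m+1` to avoid natural subtraction). -/
def IsLaplacianDmu (N : ℕ) (u f : SSp N → ℝ) : Prop :=
  Continuous u ∧ Continuous f ∧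
    ∀ ε : ℝ, 0 < ε → ∃ m₀ : ℕ, ∀ m, m₀ ≤ m → ∀ p ∈ V N (m + 1), p ∉ V N m →
      |(N : ℝ) ^ (m + 2) * H N (m + 1) u p - f p| < ε

/-- `μ` is the equidistributed Bernoulli measure:
`μ([p_1 ⋯ p_m]) = N^{−m}` for every cylinder set. -/
def IsBernoulli (N : ℕ) (μ : Measure (SSp N)) : Prop :=
  ∀ (m : ℕ) (p : SSp N), μ (cyl N m p) = (N : ENNReal)⁻¹ ^ m

/-- `ρ(x,y) = min {i : x_i ≠ y_i}` (1-based; `0`-based first disagreement plus one). -/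
noncomputable def rho (N : ℕ) (x y : SSp N) : ℕ := sInf {i | x i ≠ y i} + 1

/-- The matrix `(G_m)_{pq}`: `2/N` if `q = p`, `1/N` if `q ∈ U_{p,m}`, `0` otherwise. -/
noncomputable def Gmat (N m : ℕ) (p q : SSp N) : ℝ :=
  if q = p then 2 / N else if q ∈ U N m p then 1 / N else 0

/-- The Green's function
`g(x,y) = Σ_{m=1}^{ρ(x,y)−1} Σ_{r,s ∈ V_m ∖ V_{m−1}} (G_m)_{rs} χ_r^m(x) χ_s^m(y)`
for `ρ(x,y) > 1`, and `g(x,y) = 0` for `ρ(x,y) = 1` (the sum is then empty). -/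
noncomputable def greenFn (N : ℕ) (x y : SSp N) : ℝ :=
  ∑ m ∈ Finset.Icc 1 (rho N x y - 1),
    ∑ r ∈ (V N m).filter (fun r => r ∉ V N (m - 1)),
      ∑ s ∈ (V N m).filter (fun s => s ∉ V N (m - 1)),
        Gmat N m r s * chi N m r x * chi N m s y

/-- The Green's operator `G_μ f (x) = ∫_{Σ_N^+ ∖ {x}} g(x,y) f(y) dμ(y)`. -/
noncomputable def Gop (N : ℕ) (μ : Measure (SSp N)) (f : SSp N → ℝ) (x : SSp N) : ℝ :=
  ∫ y in ({x}ᶜ : Set (SSp N)), greenFn N x y * f y ∂μ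

/-!
Let `p ∈ V_k` and `k ≤ m`, and sum `H_m u(q)` over the vertices `q ∈ V_m` of the cylinder
`[p_1 ⋯ p_{k+1}]`. The differences taken at levels above `k` pair off inside the cylinder and
cancel, and at the lower levels only `q = p` contributes, so the sum is `H_k u(p)`, whatever `m` is.
In the same way the sum of `H_m u` over all of `V_m` vanishes.

For `k = M`, splitting off the vertex `p` gives `-H_m u(p) = ∑_{q ≠ p} H_m u(q) - H_M u(p)`, where
each `H_m u(q)` is close to `f(q) / N^{m+1}`. The sum over `q` is thus almost a Riemann sum, and
`(du)(p) = ∫_{[p_1 ⋯ p_{M+1}]} f dμ - H_M u(p)`. Summing this over `p ∈ V_M` gives `∫ f dμ`.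
-/

/-! ### Vertices and cylinders -/

lemma monotone_V (N : ℕ) : Monotone (V N) := fun _ _ hij _ hp =>
  mem_V.2 fun k hk => mem_V.1 hp k (hij.trans hk)

lemma card_V_le (N m : ℕ) : #(V N m) ≤ N ^ (m + 1) :=
  Finset.card_image_le.trans (by simp)

lemma mem_V_iff_kappa_le {N k i : ℕ} {p : SSp N} (hp : p ∈ V N k) :
    p ∈ V N i ↔ kappa N p ≤ i := by
  have hkappa : p ∈ V N (kappa N p) := Nat.sInf_mem (s := {j | p ∈ V N j}) ⟨k, hp⟩
  exact ⟨fun h => Nat.sInf_le h, fun h => monotone_V N h hkappa⟩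

lemma eq_of_mem_V_of_mem_cyl {N m : ℕ} {p q : SSp N} (hp : p ∈ V N m) (hq : q ∈ V N m)
    (h : q ∈ cyl N (m + 1) p) : q = p := by
  funext j
  rcases lt_or_ge j m with hj | hj
  · exact h j (by omega)
  · rw [const_from N m p (mem_V.1 hp) j hj, const_from N m q (mem_V.1 hq) j hj]
    exact h m m.lt_succ_self

lemma cyl_eq_cylinder {N : ℕ} (m : ℕ) (p : SSp N) : cyl N m p = PiNat.cylinder p m := rfl

lemma mem_cyl_iff_cyl_eq {N m : ℕ} {p q : SSp N} : q ∈ cyl N m p ↔ cyl N m q = cyl N m p :=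
  PiNat.mem_cylinder_iff_eq

lemma measurableSet_cyl {N : ℕ} (m : ℕ) (p : SSp N) : MeasurableSet (cyl N m p) := by
  rw [cyl_eq_cylinder]
  exact (PiNat.isOpen_cylinder (fun _ => Fin N) p m).measurableSet

/-- The level-`m` vertices `V_m ∩ [p_1 ⋯ p_k]` of a cylinder set. For `k = m` this is the
neighbourhood of `p` in `V_m`, of which `U_{p,m}` is the deleted version. -/
def cell (N m k : ℕ) (p : SSp N) : Finset (SSp N) :=
  {q ∈ V N m | q ∈ cyl N k p}

lemma mem_cell {N m k : ℕ} {p q : SSp N} : q ∈ cell N m k p ↔ q ∈ V N m ∧ q ∈ cyl N k p :=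
  Finset.mem_filter

lemma cell_zero {N : ℕ} (m : ℕ) (p : SSp N) : cell N m 0 p = V N m := by
  simp [cell, cyl]

lemma cell_succ_self {N m : ℕ} {p : SSp N} (hp : p ∈ V N m) : cell N m (m + 1) p = {p} := by
  ext q
  rw [mem_cell, Finset.mem_singleton]
  constructor
  · exact fun ⟨hq, hqp⟩ => eq_of_mem_V_of_mem_cyl hp hq hqp
  · rintro rfl
    exact ⟨hp, PiNat.self_mem_cylinder q (m + 1)⟩

lemma U_eq_cell_erase {N : ℕ} (m : ℕ) (p : SSp N) : U N m p = (cell N m m p).erase p := by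
  ext q
  rw [U, Finset.mem_filter, Finset.mem_erase, mem_cell]
  exact and_left_comm

lemma cell_erase_subset_sdiff {N M m : ℕ} {p : SSp N} (hp : p ∈ V N M) :
    (cell N m (M + 1) p).erase p ⊆ V N m \ V N M := by
  intro q hq
  obtain ⟨hqp, hq⟩ := Finset.mem_erase.1 hq
  obtain ⟨hqV, hq⟩ := mem_cell.1 hq
  exact Finset.mem_sdiff.2 ⟨hqV, fun hqM => hqp (eq_of_mem_V_of_mem_cyl hp hqM hq)⟩

/-! ### Cancellation in sums of differences -/

lemma sum_cell_sum_cell_sub_eq_zero {N i k : ℕ} (hki : k ≤ i) (u : SSp N → ℝ) (p : SSp N) :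
    ∑ q ∈ cell N i k p, ∑ r ∈ cell N i i q, (u r - u q) = 0 := by
  have hsymm : ∀ q r, q ∈ cell N i k p ∧ r ∈ cell N i i q →
      r ∈ cell N i k p ∧ q ∈ cell N i i r := by
    rintro q r ⟨hq, hr⟩
    obtain ⟨hqV, hqp⟩ := mem_cell.1 hq
    obtain ⟨hrV, hrq⟩ := mem_cell.1 hr
    have hrp : r ∈ cyl N k p := mem_cyl_iff_cyl_eq.1 hqp ▸ PiNat.cylinder_anti q hki hrq
    exact ⟨mem_cell.2 ⟨hrV, hrp⟩, mem_cell.2 ⟨hqV, (PiNat.mem_cylinder_comm q r i).1 hrq⟩⟩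
  have hswap : ∑ q ∈ cell N i k p, ∑ r ∈ cell N i i q, u r
      = ∑ r ∈ cell N i k p, ∑ _q ∈ cell N i i r, u r :=
    Finset.sum_comm' fun q r => ⟨fun h => (hsymm q r h).symm, fun h => hsymm r q h.symm⟩
  simp only [Finset.sum_sub_distrib] at hswap ⊢
  rw [hswap, sub_self]

lemma H_eq_sum_range {N m : ℕ} (u : SSp N → ℝ) {p : SSp N} (hp : p ∈ V N m) :
    H N m u p = ∑ i ∈ range (m + 1),
      if p ∈ V N i then ∑ q ∈ cell N i i p, (u q - u p) else 0 := by
  rw [H, ← Finset.sum_filter]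
  refine Finset.sum_congr ?_ fun i _ => ?_
  · ext i
    simp only [Finset.mem_Icc, Finset.mem_filter, Finset.mem_range, mem_V_iff_kappa_le hp]
    omega
  · rw [U_eq_cell_erase, Finset.sum_erase _ (sub_self _)]

lemma sum_cell_H {N m k : ℕ} (hkm : k ≤ m + 1) (u : SSp N → ℝ) (p : SSp N) :
    ∑ q ∈ cell N m k p, H N m u q
      = ∑ i ∈ range k, ∑ q ∈ cell N i k p, ∑ r ∈ cell N i i q, (u r - u q) := by
  have hfilter : ∀ i ∈ range (m + 1), {q ∈ cell N m k p | q ∈ V N i} = cell N i k p := by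
    intro i hi
    have hVi : V N i ⊆ V N m := monotone_V N (Finset.mem_range_succ_iff.1 hi)
    ext q
    simp only [Finset.mem_filter, mem_cell]
    exact ⟨fun ⟨⟨_, hqp⟩, hq⟩ => ⟨hq, hqp⟩, fun ⟨hq, hqp⟩ => ⟨⟨hVi hq, hqp⟩, hq⟩⟩
  calc ∑ q ∈ cell N m k p, H N m u q
      = ∑ i ∈ range (m + 1), ∑ q ∈ cell N m k p,
          if q ∈ V N i then ∑ r ∈ cell N i i q, (u r - u q) else 0 := by
        rw [Finset.sum_comm]
        exact Finset.sum_congr rfl fun q hq => H_eq_sum_range u (mem_cell.1 hq).1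
    _ = ∑ i ∈ range (m + 1), ∑ q ∈ cell N i k p, ∑ r ∈ cell N i i q, (u r - u q) :=
        Finset.sum_congr rfl fun i hi => by rw [← Finset.sum_filter, hfilter i hi]
    _ = ∑ i ∈ range k, ∑ q ∈ cell N i k p, ∑ r ∈ cell N i i q, (u r - u q) := by
        refine (Finset.sum_subset (Finset.range_mono hkm) fun i _ hi => ?_).symm
        exact sum_cell_sum_cell_sub_eq_zero (by simpa using hi) u p

lemma sum_cell_succ_H {N k m : ℕ} (hkm : k ≤ m) (u : SSp N → ℝ) {p : SSp N} (hp : p ∈ V N k) :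
    ∑ q ∈ cell N m (k + 1) p, H N m u q = H N k u p := by
  rw [sum_cell_H (by omega), ← sum_cell_H le_rfl, cell_succ_self hp, Finset.sum_singleton]

lemma sum_V_H_eq_zero {N : ℕ} (m : ℕ) (u : SSp N → ℝ) : ∑ p ∈ V N m, H N m u p = 0 := by
  rcases (V N m).eq_empty_or_nonempty with hV | ⟨p, -⟩
  · rw [hV, Finset.sum_empty]
  · rw [← cell_zero m p, sum_cell_H (Nat.zero_le _), Finset.range_zero, Finset.sum_empty]

/-! ### Riemann sums -/

/-- The vertex of `V_m` nearest to `x`: it follows `x` up to coordinate `m` and is constant from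
there on. Composing with it turns a function into its level-`m` step function. -/
def truncate {N : ℕ} (m : ℕ) (x : SSp N) : SSp N := fun j => x (min j m)

lemma truncate_mem_V {N : ℕ} (m : ℕ) (x : SSp N) : truncate m x ∈ V N m :=
  mem_V.2 fun i hi => by simp [truncate, hi, Nat.le_succ_of_le hi]

lemma truncate_mem_cyl {N m k : ℕ} (hkm : k ≤ m + 1) (x : SSp N) : truncate m x ∈ cyl N k x :=
  fun i hi => by simp [truncate, show i ≤ m by omega]

lemma truncate_mem_cyl_iff {N m k : ℕ} (hkm : k ≤ m + 1) {x p : SSp N} :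
    truncate m x ∈ cyl N k p ↔ x ∈ cyl N k p := by
  rw [mem_cyl_iff_cyl_eq, mem_cyl_iff_cyl_eq, mem_cyl_iff_cyl_eq.1 (truncate_mem_cyl hkm x)]

lemma truncate_eq_iff {N m : ℕ} {x p : SSp N} (hp : p ∈ V N m) :
    truncate m x = p ↔ x ∈ cyl N (m + 1) p := by
  rw [← truncate_mem_cyl_iff le_rfl]
  constructor
  · exact fun h => h ▸ PiNat.self_mem_cylinder _ _
  · exact eq_of_mem_V_of_mem_cyl hp (truncate_mem_V m x)

lemma tendsto_truncate {N : ℕ} (x : SSp N) : Tendsto (fun m => truncate m x) atTop (𝓝 x) := by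
  refine tendsto_pi_nhds.2 fun j => tendsto_const_nhds.congr' ?_
  filter_upwards [eventually_ge_atTop j] with m hm
  simp [truncate, hm]

lemma sum_V_indicator_cyl {N : ℕ} (m : ℕ) (F : SSp N → SSp N → ℝ) (x : SSp N) :
    ∑ p ∈ V N m, (cyl N (m + 1) p).indicator (F p) x = F (truncate m x) x := by
  have hV := truncate_mem_V m x
  rw [Finset.sum_eq_single_of_mem _ hV, Set.indicator_of_mem ((truncate_eq_iff hV).1 rfl)]
  exact fun p hp hne => Set.indicator_of_notMem (fun h => hne ((truncate_eq_iff hp).2 h).symm) _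

lemma measurable_comp_truncate {N : ℕ} (m : ℕ) (f : SSp N → ℝ) :
    Measurable fun x => f (truncate m x) := by
  simp only [← sum_V_indicator_cyl m fun p _ => f p]
  exact Finset.measurable_fun_sum _ fun p _ =>
    measurable_const.indicator (measurableSet_cyl (m + 1) p)

section Integration

variable {N : ℕ} {μ : Measure (SSp N)} {f : SSp N → ℝ}

lemma sum_V_setIntegral_cyl (m : ℕ) (hf : Integrable f μ) :
    ∑ p ∈ V N m, ∫ x in cyl N (m + 1) p, f x ∂μ = ∫ x, f x ∂μ := by
  simp only [← integral_indicator (measurableSet_cyl _ _)]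
  rw [← integral_finsetSum _ fun p _ => hf.indicator (measurableSet_cyl _ p)]
  simp only [sum_V_indicator_cyl m fun _ => f]

variable [IsFiniteMeasure μ]

lemma integrable_of_ae_continuousAt {K : ℝ} (hK : ∀ x, ‖f x‖ ≤ K)
    (hf : ∀ᵐ x ∂μ, ContinuousAt f x) : Integrable f μ := by
  refine .of_bound (aestronglyMeasurable_of_tendsto_ae atTop
    (fun m => (measurable_comp_truncate m f).aestronglyMeasurable) ?_) K (.of_forall hK)
  exact hf.mono fun x hx => hx.tendsto.comp (tendsto_truncate x)

lemma tendsto_integral_comp_truncate {K : ℝ} (hK : ∀ x, ‖f x‖ ≤ K)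
    (hf : ∀ᵐ x ∂μ, ContinuousAt f x) :
    Tendsto (fun m => ∫ x, f (truncate m x) ∂μ) atTop (𝓝 (∫ x, f x ∂μ)) :=
  tendsto_integral_of_dominated_convergence (fun _ => K)
    (fun m => (measurable_comp_truncate m f).aestronglyMeasurable) (integrable_const K)
    (fun m => .of_forall fun x => hK (truncate m x))
    (hf.mono fun x hx => hx.tendsto.comp (tendsto_truncate x))

lemma IsBernoulli.integral_comp_truncate (hμ : IsBernoulli N μ) (m : ℕ) (f : SSp N → ℝ) :
    ∫ x, f (truncate m x) ∂μ = ∑ p ∈ V N m, f p / (N : ℝ) ^ (m + 1) := by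
  simp only [← sum_V_indicator_cyl m fun p _ => f p]
  rw [integral_finsetSum _ fun p _ => (integrable_const _).indicator (measurableSet_cyl _ p)]
  refine Finset.sum_congr rfl fun p _ => ?_
  rw [integral_indicator_const _ (measurableSet_cyl _ p), measureReal_def, hμ]
  simp [div_eq_inv_mul]

lemma IsBernoulli.setIntegral_cyl_comp_truncate (hμ : IsBernoulli N μ) {m k : ℕ}
    (hkm : k ≤ m + 1) (f : SSp N → ℝ) (p : SSp N) :
    ∫ x in cyl N k p, f (truncate m x) ∂μ = ∑ q ∈ cell N m k p, f q / (N : ℝ) ^ (m + 1) := by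
  have hind : (cyl N k p).indicator (fun x => f (truncate m x))
      = fun x => (cyl N k p).indicator f (truncate m x) := by
    funext x
    simp only [Set.indicator_apply, truncate_mem_cyl_iff hkm]
  rw [← integral_indicator (measurableSet_cyl k p), hind, hμ.integral_comp_truncate, cell,
    Finset.sum_filter]
  exact Finset.sum_congr rfl fun q _ => by rw [Set.indicator_apply, ite_div, zero_div]

lemma IsBernoulli.tendsto_sum_cell_div (hμ : IsBernoulli N μ) {K : ℝ} (hK : ∀ x, ‖f x‖ ≤ K)
    (hf : ∀ᵐ x ∂μ, ContinuousAt f x) (k : ℕ) (p : SSp N) :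
    Tendsto (fun m => ∑ q ∈ cell N m k p, f q / (N : ℝ) ^ (m + 1)) atTop
      (𝓝 (∫ x in cyl N k p, f x ∂μ)) := by
  refine (tendsto_integral_comp_truncate hK (ae_restrict_of_ae hf)).congr' ?_
  filter_upwards [eventually_ge_atTop k] with m hm
  exact hμ.setIntegral_cyl_comp_truncate (by omega) f p

end Integration

/-! ### Neumann derivatives -/

/-- The limit condition in `IsLaplacianOn`, without continuity of `u` and `f`:
`N^{m+1} H_m u` converges to `f` uniformly on `V_m ∖ V_M`. -/
def HasLaplacianLimit (N M : ℕ) (u f : SSp N → ℝ) : Prop :=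
  ∀ ε : ℝ, 0 < ε → ∃ m₀ : ℕ, ∀ m, m₀ ≤ m → ∀ p ∈ V N m, p ∉ V N M →
    |(N : ℝ) ^ (m + 1) * H N m u p - f p| < ε

lemma HasLaplacianLimit.tendsto_sum_H_sub {N M : ℕ} (hN : 0 < N) {u f : SSp N → ℝ}
    (huf : HasLaplacianLimit N M u f) {S : ℕ → Finset (SSp N)}
    (hS : ∀ m, S m ⊆ V N m \ V N M) :
    Tendsto (fun m => ∑ q ∈ S m, (H N m u q - f q / (N : ℝ) ^ (m + 1))) atTop (𝓝 0) := by
  rw [Metric.tendsto_atTop]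
  intro ε hε
  obtain ⟨m₀, hm₀⟩ := huf (ε / 2) (half_pos hε)
  refine ⟨m₀, fun m hm => ?_⟩
  have hpow : (0 : ℝ) < (N : ℝ) ^ (m + 1) := by positivity
  have hterm : ∀ q ∈ S m, |H N m u q - f q / (N : ℝ) ^ (m + 1)| ≤ ε / 2 / (N : ℝ) ^ (m + 1) := by
    intro q hq
    obtain ⟨hqm, hqM⟩ := Finset.mem_sdiff.1 (hS m hq)
    rw [sub_div' hpow.ne', abs_div, abs_of_pos hpow, mul_comm]
    gcongr
    exact (hm₀ m hm q hqm hqM).le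
  have hcard : (#(S m) : ℝ) ≤ (N : ℝ) ^ (m + 1) := by
    exact_mod_cast (Finset.card_le_card ((hS m).trans Finset.sdiff_subset)).trans (card_V_le N m)
  rw [Real.dist_eq, sub_zero]
  calc |∑ q ∈ S m, (H N m u q - f q / (N : ℝ) ^ (m + 1))|
      ≤ ∑ q ∈ S m, |H N m u q - f q / (N : ℝ) ^ (m + 1)| := Finset.abs_sum_le_sum_abs _ _
    _ ≤ #(S m) • (ε / 2 / (N : ℝ) ^ (m + 1)) := Finset.sum_le_card_nsmul _ _ _ hterm
    _ ≤ (N : ℝ) ^ (m + 1) * (ε / 2 / (N : ℝ) ^ (m + 1)) := by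
        rw [nsmul_eq_mul]
        gcongr
    _ = ε / 2 := mul_div_cancel₀ _ hpow.ne'
    _ < ε := half_lt_self hε

lemma HasLaplacianLimit.tendsto_neg_H {N M : ℕ} (hN : 2 ≤ N) {μ : Measure (SSp N)}
    [IsFiniteMeasure μ] (hμ : IsBernoulli N μ) {u f : SSp N → ℝ} {K : ℝ}
    (hK : ∀ x, ‖f x‖ ≤ K) (hf : ∀ᵐ x ∂μ, ContinuousAt f x) (huf : HasLaplacianLimit N M u f)
    {p : SSp N} (hp : p ∈ V N M) :
    Tendsto (fun m => -H N m u p) atTop (𝓝 (∫ x in cyl N (M + 1) p, f x ∂μ - H N M u p)) := by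
  have hvertex : Tendsto (fun m => f p / (N : ℝ) ^ (m + 1)) atTop (𝓝 0) :=
    tendsto_const_nhds.div_atTop <|
      (tendsto_pow_atTop_atTop_of_one_lt (Nat.one_lt_cast.2 hN)).comp (tendsto_add_atTop_nat 1)
  have herror := huf.tendsto_sum_H_sub (by omega) fun _ => cell_erase_subset_sdiff hp
  have hlim := ((herror.add (hμ.tendsto_sum_cell_div hK hf (M + 1) p)).sub hvertex).sub_const
    (H N M u p)
  rw [zero_add, sub_zero] at hlim
  refine hlim.congr' ?_
  filter_upwards [eventually_ge_atTop M] with m hm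
  have hpcell : p ∈ cell N m (M + 1) p :=
    mem_cell.2 ⟨monotone_V N hm hp, PiNat.self_mem_cylinder p (M + 1)⟩
  rw [← sum_cell_succ_H hm u hp, Finset.sum_sub_distrib, Finset.sum_erase_eq_sub hpcell,
    Finset.sum_erase_eq_sub hpcell]
  ring

theorem statement13_general {N : ℕ} (hN : 2 ≤ N) {μ : Measure (SSp N)} [IsFiniteMeasure μ]
    (hμ : IsBernoulli N μ) {M : ℕ} {u f : SSp N → ℝ} {K : ℝ} (hK : ∀ x, ‖f x‖ ≤ K)
    (hf : ∀ᵐ x ∂μ, ContinuousAt f x) (huf : HasLaplacianLimit N M u f) :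
    ∃ du : SSp N → ℝ,
      (∀ p ∈ V N M, Tendsto (fun m => -(H N m u p)) atTop (𝓝 (du p))) ∧
      ∑ p ∈ V N M, du p = ∫ x, f x ∂μ := by
  refine ⟨fun p => ∫ x in cyl N (M + 1) p, f x ∂μ - H N M u p,
    fun p hp => huf.tendsto_neg_H hN hμ hK hf hp, ?_⟩
  rw [Finset.sum_sub_distrib, sum_V_H_eq_zero, sub_zero,
    sum_V_setIntegral_cyl M (integrable_of_ae_continuousAt hK hf)]

/-- for `u ∈ 𝒟_M` with `Δu = f`,
`Σ_{p ∈ V_M} (du)(p) = ∫ f dμ`, where `(du)(p) = lim_m (−H_m u(p))`. -/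
theorem statement13 (N : ℕ) (hN : 2 ≤ N)
    (μ : Measure (SSp N)) [IsProbabilityMeasure μ] (hμ : IsBernoulli N μ)
    (M : ℕ) (u f : SSp N → ℝ) (huf : IsLaplacianOn N M u f) :
    ∃ du : SSp N → ℝ,
      (∀ p ∈ V N M, Tendsto (fun m => -(H N m u p)) atTop (nhds (du p))) ∧
      ∑ p ∈ V N M, du p = ∫ x, f x ∂μ := by
  obtain ⟨-, hf, hlim⟩ := huf
  obtain ⟨K, hK⟩ := isCompact_univ.exists_bound_of_continuousOn hf.continuousOn
  exact statement13_general hN hμ (fun x => hK x trivial) (.of_forall fun _ => hf.continuousAt) hlim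
end
end

section
/- For every continuous f : Σ_N^+ → ℝ: (i) G_μ f(p) = 0 for every p ∈ V_0; (ii) for every n ≥ 1 and p ∈ V_n ∖ V_{n−1}, H_n(G_μ f)(p) = −∫_{Σ_N^+} χ_p^n f dμ; (iii) G_μ f ∈ D_μ and Δ(G_μ f) = −f. -/
open Filter Topology MeasureTheory Finset Classical

noncomputable section

/-!
The Green's function is a sum of levels. Level `k + 1` of `g(x, y)` vanishes unless `x` and `y`
agree up to coordinate `k` and both change their value from coordinate `k` to `k + 1`, and it is
then `(1 + δ) / N`, where `δ = 1` if `x` and `y` also agree at `k + 1` and `δ = 0` otherwise.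

At a vertex `p ∈ V_n` all levels above `n` vanish, so `G_μ f(p)` is a finite sum. The levels below
`n` only see the first `n` coordinates, hence are shared by `p` and its neighbours in `U_{p,n}`,
and `H_n` acts on level `n` alone. The values of that level at all the sequences
`p_0 ⋯ p_{n-1} a a ⋯`, with `a` ranging over the symbols, add up to the indicator of
`{y : y ∈ [p_0 ⋯ p_{n-1}], y_{n-1} ≠ y_n}`; subtracting `N` times the value at `p`, which is
`1 + δ` times the same indicator, leaves exactly `-χ_p^n`.

Since `N^{n+1} ∫ χ_p^n f dμ` is the average of `f` over a cylinder around `p`, uniform continuity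
of `f` yields the Laplacian. Level `k + 1` of `G_μ f` is locally constant and of size
`O(N^{-k})`, so `G_μ f` is continuous by the Weierstrass M-test.
-/

lemma sum_erase_one_add_ite {ι R : Type*} [Fintype ι] [DecidableEq ι] [Ring R] {b c : ι}
    (h : c ≠ b) : ∑ a ∈ univ.erase b, (1 + if c = a then 1 else 0 : R) = Fintype.card ι := by
  rw [sum_add_distrib, sum_ite_eq, if_pos (mem_erase.2 ⟨h, mem_univ c⟩), sum_const,
    card_erase_of_mem (mem_univ b), card_univ, nsmul_one,
    Nat.cast_pred (Fintype.card_pos_iff.2 ⟨b⟩), sub_add_cancel]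

section Cylinder

variable {E : ℕ → Type*} [∀ n, TopologicalSpace (E n)] [∀ n, DiscreteTopology (E n)]

lemma continuous_of_forall_mem_cylinder_eq {X : Type*} [TopologicalSpace X]
    {φ : (∀ n, E n) → X} (n : ℕ) (h : ∀ x, ∀ y ∈ PiNat.cylinder x n, φ y = φ x) :
    Continuous φ :=
  ((IsLocallyConstant.iff_exists_open φ).2 fun x =>
    ⟨_, PiNat.isOpen_cylinder E x n, PiNat.self_mem_cylinder x n, h x⟩).continuous

lemma exists_forall_mem_cylinder_dist_lt [∀ n, CompactSpace (E n)] {X : Type*}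
    [PseudoMetricSpace X] {f : (∀ n, E n) → X} (hf : Continuous f) {ε : ℝ} (hε : 0 < ε) :
    ∃ n, ∀ x, ∀ y ∈ PiNat.cylinder x n, dist (f y) (f x) < ε := by
  let _ : MetricSpace (∀ n, E n) := PiNat.metricSpace
  have huc : UniformContinuous f := CompactSpace.uniformContinuous_of_continuous hf
  obtain ⟨δ, hδ, h⟩ := Metric.uniformContinuous_iff.1 huc ε hε
  obtain ⟨n, hn⟩ := exists_pow_lt_of_lt_one hδ one_half_lt_one
  exact ⟨n, fun x y hy => h ((PiNat.mem_cylinder_iff_dist_le.1 hy).trans_lt hn)⟩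

lemma tendstoUniformly_setAverage_cylinder [∀ n, CompactSpace (E n)]
    [MeasurableSpace (∀ n, E n)] [OpensMeasurableSpace (∀ n, E n)] {μ : Measure (∀ n, E n)}
    [IsFiniteMeasure μ] (hμ : ∀ x n, μ (PiNat.cylinder x n) ≠ 0) {X : Type*}
    [NormedAddCommGroup X] [NormedSpace ℝ X] [CompleteSpace X] {f : (∀ n, E n) → X}
    (hf : Continuous f) :
    TendstoUniformly (fun n x => ⨍ y in PiNat.cylinder x n, f y ∂μ) f atTop := by
  have hint : Integrable f μ :=
    hf.integrable_of_hasCompactSupport (HasCompactSupport.of_compactSpace f)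
  refine Metric.tendstoUniformly_iff.2 fun ε hε => ?_
  obtain ⟨n₀, hn₀⟩ := exists_forall_mem_cylinder_dist_lt hf (half_pos hε)
  filter_upwards [eventually_ge_atTop n₀] with n hn x
  have hball : ∀ y ∈ PiNat.cylinder x n, f y ∈ Metric.closedBall (f x) (ε / 2) :=
    fun y hy => (hn₀ x y (PiNat.cylinder_anti x hn hy)).le
  have havg := (convex_closedBall (f x) (ε / 2)).set_average_mem Metric.isClosed_closedBall
    (hμ x n) (measure_ne_top μ _)
    (ae_restrict_of_forall_mem (PiNat.isOpen_cylinder E x n).measurableSet hball)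
    hint.integrableOn
  rw [dist_comm]
  exact (Metric.mem_closedBall.1 havg).trans_lt (half_lt_self hε)

end Cylinder

/-- The sequence `x_0 ⋯ x_{n-1} a a a ⋯`. The points of `V_n` are those with `a = x_n`, and
the neighbours of `p ∈ V_n` at level `n` are obtained by varying `a`. -/
def spliceConst {α : Type*} (n : ℕ) (x : ℕ → α) (a : α) : ℕ → α :=
  fun j => if j < n then x j else a

section SpliceConst

variable {α : Type*} {n j : ℕ}

lemma spliceConst_of_lt (x : ℕ → α) (a : α) (h : j < n) : spliceConst n x a j = x j :=
  if_pos h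

lemma spliceConst_of_le (x : ℕ → α) (a : α) (h : n ≤ j) : spliceConst n x a j = a :=
  if_neg h.not_gt

lemma spliceConst_mem_cylinder (n : ℕ) (x : ℕ → α) (a : α) :
    spliceConst n x a ∈ PiNat.cylinder x n :=
  fun _ hi => spliceConst_of_lt x a hi

lemma spliceConst_eq_spliceConst_iff {x y : ℕ → α} {a b : α} :
    spliceConst n x a = spliceConst n y b ↔ x ∈ PiNat.cylinder y n ∧ a = b := by
  constructor
  · intro h
    refine ⟨fun i hi => ?_, ?_⟩
    · simpa only [spliceConst_of_lt _ _ hi] using congrFun h i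
    · simpa only [spliceConst_of_le _ _ le_rfl] using congrFun h n
  · rintro ⟨hxy, rfl⟩
    funext j
    rcases lt_or_ge j n with hj | hj
    · rw [spliceConst_of_lt x a hj, spliceConst_of_lt y a hj, hxy j hj]
    · rw [spliceConst_of_le x a hj, spliceConst_of_le y a hj]

end SpliceConst

section Vertices

variable {N n m : ℕ} {p : SSp N}

lemma V_mono (h : n ≤ m) : V N n ⊆ V N m :=
  fun _ hp => mem_V.2 fun i hi => mem_V.1 hp i (h.trans hi)

lemma mem_V_iff_of_mem_V_succ (hp : p ∈ V N (n + 1)) : p ∈ V N n ↔ p n = p (n + 1) := by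
  refine ⟨fun h => mem_V.1 h n le_rfl, fun h => mem_V.2 fun i hi => ?_⟩
  rcases hi.eq_or_lt with rfl | hi
  · exact h
  · exact mem_V.1 hp i hi

lemma spliceConst_mem_V (n : ℕ) (p : SSp N) (a : Fin N) : spliceConst n p a ∈ V N n :=
  mem_V.2 fun i hi => by
    rw [spliceConst_of_le p a hi, spliceConst_of_le p a (hi.trans i.le_succ)]

lemma spliceConst_succ_mem_V_iff {a : Fin N} : spliceConst (n + 1) p a ∈ V N n ↔ p n = a := by
  rw [mem_V_iff_of_mem_V_succ (spliceConst_mem_V _ _ _), spliceConst_of_lt p a n.lt_succ_self,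
    spliceConst_of_le p a le_rfl]

lemma spliceConst_self (hp : p ∈ V N n) : spliceConst n p (p n) = p := by
  funext j
  rcases lt_or_ge j n with hj | hj
  · exact spliceConst_of_lt p _ hj
  · rw [spliceConst_of_le p _ hj, const_from N n p (mem_V.1 hp) j hj]

lemma mem_cylinder_succ_iff_eq_spliceConst (hp : p ∈ V N n) {x : SSp N} :
    x ∈ PiNat.cylinder p (n + 1) ↔ p = spliceConst n x (x n) := by
  conv_rhs => rw [← spliceConst_self hp, eq_comm, spliceConst_eq_spliceConst_iff]
  exact Nat.forall_lt_succ_right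

lemma U_eq_image_spliceConst (hp : p ∈ V N n) :
    U N n p = (univ.erase (p n)).image (spliceConst n p) := by
  ext q
  simp only [U, mem_filter, mem_image, mem_erase, mem_univ, and_true]
  constructor
  · rintro ⟨hq, hne, hagree⟩
    have hsplice : spliceConst n p (q n) = q :=
      (spliceConst_eq_spliceConst_iff.2
        ⟨(PiNat.mem_cylinder_comm p q n).1 hagree, rfl⟩).trans (spliceConst_self hq)
    refine ⟨q n, fun h => hne ?_, hsplice⟩
    rw [← hsplice, h, spliceConst_self hp]
  · rintro ⟨a, ha, rfl⟩
    refine ⟨spliceConst_mem_V n p a, fun h => ha ?_, spliceConst_mem_cylinder n p a⟩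
    rw [← h, spliceConst_of_le p a le_rfl]

lemma sum_U_sub (hp : p ∈ V N n) (u : SSp N → ℝ) :
    ∑ q ∈ U N n p, (u q - u p) = ∑ a, (u (spliceConst n p a) - u p) := by
  have hinj : Function.Injective (spliceConst n p) :=
    fun _ _ h => (spliceConst_eq_spliceConst_iff.1 h).2
  rw [U_eq_image_spliceConst hp, sum_image hinj.injOn]
  exact sum_erase _ (by rw [spliceConst_self hp, sub_self])

lemma kappa_eq_succ (hp : p ∈ V N (n + 1)) (hp' : p ∉ V N n) : kappa N p = n + 1 := by
  refine le_antisymm (Nat.sInf_le hp) (Nat.succ_le_of_lt (lt_of_not_ge fun h => hp' ?_))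
  exact V_mono h (Nat.sInf_mem (s := {j | p ∈ V N j}) ⟨_, hp⟩)

lemma H_succ_eq_sum_spliceConst (hp : p ∈ V N (n + 1)) (hp' : p ∉ V N n) (u : SSp N → ℝ) :
    H N (n + 1) u p = ∑ a, (u (spliceConst (n + 1) p a) - u p) := by
  rw [H, kappa_eq_succ hp hp', Icc_self, sum_singleton, sum_U_sub hp]

lemma chi_eq_indicator_cylinder (N m : ℕ) (p : SSp N) :
    chi N m p = (PiNat.cylinder p (m + 1)).indicator 1 :=
  rfl

lemma chi_eq_ite (hp : p ∈ V N m) (x : SSp N) :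
    chi N m p x = if p = spliceConst m x (x m) then 1 else 0 := by
  simp only [chi_eq_indicator_cylinder, Set.indicator_apply,
    mem_cylinder_succ_iff_eq_spliceConst hp, Pi.one_apply]

lemma rho_eq_firstDiff_add_one (x y : SSp N) : rho N x y = PiNat.firstDiff x y + 1 := by
  rw [rho, PiNat.firstDiff_def]
  split_ifs with h
  · rw [Nat.sInf_def (s := {i | x i ≠ y i}) (Function.ne_iff.1 h)]
    congr!
  · simp [not_ne_iff.1 h]

end Vertices

/-- The contribution of level `k + 1` to the Green's function; the levels start at `1`, and the
shift keeps `V_{m-1}` free of truncated subtraction. -/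
def levelGreen (N k : ℕ) (x y : SSp N) : ℝ :=
  ∑ r ∈ V N (k + 1) with r ∉ V N k, ∑ s ∈ V N (k + 1) with s ∉ V N k,
    Gmat N (k + 1) r s * chi N (k + 1) r x * chi N (k + 1) s y

section LevelGreen

variable {N k n : ℕ} {x y p : SSp N}

lemma sum_mul_chi (F : SSp N → ℝ) (k : ℕ) (x : SSp N) :
    ∑ r ∈ V N (k + 1) with r ∉ V N k, F r * chi N (k + 1) r x =
      if x k ≠ x (k + 1) then F (spliceConst (k + 1) x (x (k + 1))) else 0 := by
  have hchi : ∀ r ∈ (V N (k + 1)).filter (· ∉ V N k), F r * chi N (k + 1) r x =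
      if r = spliceConst (k + 1) x (x (k + 1)) then F r else 0 := fun r hr => by
    rw [chi_eq_ite (mem_filter.1 hr).1, mul_ite, mul_one, mul_zero]
  simp only [sum_congr rfl hchi, sum_ite_eq', mem_filter, spliceConst_mem_V, true_and,
    spliceConst_succ_mem_V_iff, ne_eq]

lemma Gmat_spliceConst (n : ℕ) (x y : SSp N) (a b : Fin N) :
    Gmat N n (spliceConst n x a) (spliceConst n y b) =
      if y ∈ PiNat.cylinder x n then (1 + if b = a then 1 else 0 : ℝ) / N else 0 := by
  have hU : spliceConst n y b ∈ U N n (spliceConst n x a) ↔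
      y ∈ PiNat.cylinder x n ∧ b ≠ a := by
    have hcyl : (∀ i < n, spliceConst n y b i = spliceConst n x a i) ↔
        y ∈ PiNat.cylinder x n :=
      forall₂_congr fun i hi => by rw [spliceConst_of_lt y b hi, spliceConst_of_lt x a hi]
    rw [U, mem_filter, hcyl, ne_eq, spliceConst_eq_spliceConst_iff]
    have := spliceConst_mem_V n y b
    tauto
  simp only [Gmat, spliceConst_eq_spliceConst_iff, hU]
  by_cases hxy : y ∈ PiNat.cylinder x n <;> by_cases hab : b = a <;>
    simp [hxy, hab, one_add_one_eq_two]

lemma levelGreen_eq_ite (k : ℕ) (x y : SSp N) :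
    levelGreen N k x y =
      if y ∈ PiNat.cylinder x (k + 1) ∧ x k ≠ x (k + 1) ∧ y k ≠ y (k + 1) then
        (1 + if y (k + 1) = x (k + 1) then 1 else 0 : ℝ) / N
      else 0 := by
  by_cases hx : x k = x (k + 1) <;> by_cases hy : y k = y (k + 1) <;>
    simp [levelGreen, sum_mul_chi, Gmat_spliceConst, hx, hy]

lemma levelGreen_eq_zero_of_notMem_cylinder (h : y ∉ PiNat.cylinder x (k + 1)) :
    levelGreen N k x y = 0 := by
  rw [levelGreen_eq_ite, if_neg fun h' => h h'.1]

lemma levelGreen_eq_zero_of_mem_V (hp : p ∈ V N n) (h : n ≤ k) (y : SSp N) :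
    levelGreen N k p y = 0 := by
  rw [levelGreen_eq_ite, if_neg fun h' => h'.2.1 (mem_V.1 hp k h)]

lemma levelGreen_comm (k : ℕ) (x y : SSp N) : levelGreen N k x y = levelGreen N k y x := by
  simp only [levelGreen_eq_ite, PiNat.mem_cylinder_comm y x, and_comm (a := y k ≠ _),
    eq_comm (a := y (k + 1))]

lemma levelGreen_congr_left {x' : SSp N} (h : x' ∈ PiNat.cylinder x (k + 2)) (y : SSp N) :
    levelGreen N k x' y = levelGreen N k x y := by
  have hcyl : PiNat.cylinder x' (k + 1) = PiNat.cylinder x (k + 1) :=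
    PiNat.mem_cylinder_iff_eq.1 (PiNat.cylinder_anti x (k + 1).le_succ h)
  simp only [levelGreen_eq_ite, hcyl, h k (by omega), h (k + 1) (by omega)]

lemma continuous_levelGreen (k : ℕ) (x : SSp N) : Continuous (levelGreen N k x) :=
  continuous_of_forall_mem_cylinder_eq (k + 2) fun y y' h => by
    rw [levelGreen_comm k x, levelGreen_comm k x, levelGreen_congr_left h]

lemma norm_levelGreen_le (k : ℕ) (x y : SSp N) : ‖levelGreen N k x y‖ ≤ 2 / N := by
  rw [levelGreen_eq_ite]
  split_ifs
  · norm_num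
  · rw [add_zero, Real.norm_of_nonneg (by positivity)]
    gcongr
    exact one_le_two
  · rw [norm_zero]
    positivity

lemma greenFn_eq_sum_range (x y : SSp N) :
    greenFn N x y = ∑ k ∈ range (PiNat.firstDiff x y), levelGreen N k x y := by
  rw [greenFn, rho_eq_firstDiff_add_one, Nat.add_sub_cancel, range_eq_Ico]
  exact (sum_Ico_add' _ 0 _ 1).symm

lemma greenFn_eq_tsum (h : x ≠ y) : greenFn N x y = ∑' k, levelGreen N k x y := by
  rw [greenFn_eq_sum_range]
  refine (tsum_eq_sum fun k hk => levelGreen_eq_zero_of_notMem_cylinder fun hmem => hk ?_).symm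
  rw [PiNat.mem_cylinder_comm, PiNat.mem_cylinder_iff_le_firstDiff h] at hmem
  exact mem_range.2 hmem

lemma sum_levelGreen_spliceConst (k : ℕ) (p y : SSp N) :
    ∑ a, levelGreen N k (spliceConst (k + 1) p a) y =
      if y ∈ PiNat.cylinder p (k + 1) ∧ y k ≠ y (k + 1) then 1 else 0 := by
  have hN : (N : ℝ) ≠ 0 := Nat.cast_ne_zero.2 (p 0).pos.ne'
  have hcyl : ∀ a, PiNat.cylinder (spliceConst (k + 1) p a) (k + 1) = PiNat.cylinder p (k + 1) :=
    fun a => PiNat.mem_cylinder_iff_eq.1 (spliceConst_mem_cylinder _ p a)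
  simp only [levelGreen_eq_ite, hcyl, spliceConst_of_lt p _ k.lt_succ_self,
    spliceConst_of_le p _ (le_refl (k + 1))]
  split_ifs with h
  · have hne : y (k + 1) ≠ p k := h.1 k k.lt_succ_self ▸ h.2.symm
    simp only [h.1, h.2, true_and, and_true, ne_comm (a := p k), ne_eq, not_false_eq_true]
    rw [← sum_filter, filter_ne', ← sum_div, sum_erase_one_add_ite hne, Fintype.card_fin,
      div_self hN]
  · exact sum_eq_zero fun a _ => if_neg fun h' => h ⟨h'.1, h'.2.2⟩

lemma sum_levelGreen_spliceConst_sub (hp : p k ≠ p (k + 1)) (y : SSp N) :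
    ∑ a, (levelGreen N k (spliceConst (k + 1) p a) y - levelGreen N k p y) =
      -chi N (k + 1) p y := by
  have hN : (N : ℝ) ≠ 0 := Nat.cast_ne_zero.2 (p 0).pos.ne'
  have hmem : y ∈ PiNat.cylinder p (k + 1 + 1) ↔
      y ∈ PiNat.cylinder p (k + 1) ∧ y (k + 1) = p (k + 1) := Nat.forall_lt_succ_right
  rw [sum_sub_distrib, sum_levelGreen_spliceConst, sum_const, card_univ, Fintype.card_fin,
    nsmul_eq_mul, levelGreen_eq_ite, mul_ite, mul_div_cancel₀ _ hN,
    chi_eq_indicator_cylinder, Set.indicator_apply, hmem]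
  by_cases hy : y ∈ PiNat.cylinder p (k + 1)
  · have hyk : y k = p k := hy k k.lt_succ_self
    by_cases hlast : y (k + 1) = p (k + 1) <;> simp [hy, hyk, hp, hlast]
  · simp [hy]

end LevelGreen

/-- The contribution of level `k + 1` to the Green's operator. -/
def levelGop (N : ℕ) (μ : Measure (SSp N)) (k : ℕ) (f : SSp N → ℝ) (x : SSp N) : ℝ :=
  ∫ y, levelGreen N k x y * f y ∂μ

section GreenOperator

variable {N k n : ℕ} {μ : Measure (SSp N)} {f : SSp N → ℝ} {p : SSp N}

lemma integrable_levelGreen_mul (hf : Integrable f μ) (k : ℕ) (x : SSp N) :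
    Integrable (fun y => levelGreen N k x y * f y) μ :=
  hf.bdd_mul (continuous_levelGreen k x).aestronglyMeasurable
    (ae_of_all μ (norm_levelGreen_le k x))

lemma levelGop_congr {x x' : SSp N} (h : x' ∈ PiNat.cylinder x (k + 2)) :
    levelGop N μ k f x' = levelGop N μ k f x := by
  simp only [levelGop, levelGreen_congr_left h]

lemma continuous_levelGop (μ : Measure (SSp N)) (k : ℕ) (f : SSp N → ℝ) :
    Continuous (levelGop N μ k f) :=
  continuous_of_forall_mem_cylinder_eq (k + 2) fun _ _ => levelGop_congr

lemma sum_levelGop_spliceConst_sub (hf : Integrable f μ) (hp : p k ≠ p (k + 1)) :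
    ∑ a, (levelGop N μ k f (spliceConst (k + 1) p a) - levelGop N μ k f p) =
      -∫ y, chi N (k + 1) p y * f y ∂μ := by
  have hint := integrable_levelGreen_mul hf k
  simp only [levelGop, ← integral_sub (hint _) (hint p)]
  rw [← integral_finsetSum, ← integral_neg]
  · simp only [← sub_mul, ← sum_mul, sum_levelGreen_spliceConst_sub hp, neg_mul]
  · exact fun a _ => (hint _).sub (hint p)

lemma Gop_eq_integral_tsum [NullSingletonClass μ] (f : SSp N → ℝ) (x : SSp N) :
    Gop N μ f x = ∫ y, ∑' k, levelGreen N k x y * f y ∂μ := by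
  rw [Gop, restrict_compl_singleton]
  refine integral_congr_ae ((Measure.ae_ne μ x).mono fun y hy => ?_)
  simp only [greenFn_eq_tsum hy.symm, tsum_mul_right]

lemma Gop_eq_sum_of_mem_V [NullSingletonClass μ] (hf : Integrable f μ) (hp : p ∈ V N n) :
    Gop N μ f p = ∑ k ∈ range n, levelGop N μ k f p := by
  have hfinite : ∀ y, ∑' k, levelGreen N k p y * f y =
      ∑ k ∈ range n, levelGreen N k p y * f y := fun y =>
    tsum_eq_sum fun k hk => by
      rw [levelGreen_eq_zero_of_mem_V hp (not_lt.1 (mem_range.not.1 hk)), zero_mul]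
  simp only [Gop_eq_integral_tsum, hfinite, levelGop]
  exact integral_finsetSum _ fun k _ => integrable_levelGreen_mul hf k p

lemma Gop_eq_zero_of_mem_V_zero [NullSingletonClass μ] (hf : Integrable f μ) (hp : p ∈ V N 0) :
    Gop N μ f p = 0 := by
  rw [Gop_eq_sum_of_mem_V hf hp, range_zero, sum_empty]

lemma Gop_spliceConst_sub [NullSingletonClass μ] (hf : Integrable f μ) (hp : p ∈ V N (n + 1))
    (a : Fin N) :
    Gop N μ f (spliceConst (n + 1) p a) - Gop N μ f p =
      levelGop N μ n f (spliceConst (n + 1) p a) - levelGop N μ n f p := by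
  have hlower : ∀ k ∈ range n,
      levelGop N μ k f (spliceConst (n + 1) p a) = levelGop N μ k f p := fun k hk =>
    levelGop_congr <| PiNat.cylinder_anti p (by have := mem_range.1 hk; omega)
      (spliceConst_mem_cylinder (n + 1) p a)
  rw [Gop_eq_sum_of_mem_V hf hp, Gop_eq_sum_of_mem_V hf (spliceConst_mem_V _ p a),
    sum_range_succ, sum_range_succ, sum_congr rfl hlower, add_sub_add_left_eq_sub]

lemma H_succ_Gop [NullSingletonClass μ] (hf : Integrable f μ) (hp : p ∈ V N (n + 1))
    (hp' : p ∉ V N n) :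
    H N (n + 1) (Gop N μ f) p = -∫ x, chi N (n + 1) p x * f x ∂μ := by
  rw [H_succ_eq_sum_spliceConst hp hp', sum_congr rfl fun a _ => Gop_spliceConst_sub hf hp a]
  exact sum_levelGop_spliceConst_sub hf ((mem_V_iff_of_mem_V_succ hp).not.1 hp')

end GreenOperator

section Bernoulli

variable {N : ℕ} {μ : Measure (SSp N)}

lemma IsBernoulli.measureReal_cylinder (hμ : IsBernoulli N μ) (x : SSp N) (n : ℕ) :
    μ.real (PiNat.cylinder x n) = (N : ℝ)⁻¹ ^ n := by
  have hcyl : μ (PiNat.cylinder x n) = (N : ENNReal)⁻¹ ^ n := hμ n x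
  simp [Measure.real, hcyl]

lemma IsBernoulli.measure_cylinder_ne_zero (hμ : IsBernoulli N μ) (x : SSp N) (n : ℕ) :
    μ (PiNat.cylinder x n) ≠ 0 :=
  (hμ n x).trans_ne (pow_ne_zero n (ENNReal.inv_ne_zero.2 (ENNReal.natCast_ne_top N)))

lemma IsBernoulli.nullSingletonClass (hμ : IsBernoulli N μ) (hN : 2 ≤ N) :
    NullSingletonClass μ := by
  refine ⟨fun x => ?_⟩
  have hlim : Tendsto (fun n : ℕ => (N : ENNReal)⁻¹ ^ n) atTop (𝓝 0) :=
    ENNReal.tendsto_pow_atTop_nhds_zero_of_lt_one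
      (ENNReal.inv_lt_one.2 (Nat.one_lt_cast.2 hN))
  refine le_antisymm (ge_of_tendsto' hlim fun n => ?_) bot_le
  rw [← hμ n x]
  exact measure_mono (Set.singleton_subset_iff.2 (PiNat.self_mem_cylinder x n))

lemma IsBernoulli.pow_mul_integral_chi_mul (hμ : IsBernoulli N μ) (m : ℕ) (p : SSp N)
    (f : SSp N → ℝ) :
    (N : ℝ) ^ (m + 1) * ∫ x, chi N m p x * f x ∂μ = ⨍ x in PiNat.cylinder p (m + 1), f x ∂μ := by
  have hchi : ∀ x, chi N m p x * f x = (PiNat.cylinder p (m + 1)).indicator f x := fun x => by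
    simp only [chi_eq_indicator_cylinder, Set.indicator_apply, Pi.one_apply, ite_mul, one_mul,
      zero_mul]
  rw [setAverage_eq, hμ.measureReal_cylinder, inv_pow, inv_inv, smul_eq_mul]
  simp only [hchi, integral_indicator (PiNat.isOpen_cylinder _ p (m + 1)).measurableSet]

lemma IsBernoulli.tendstoUniformly_pow_mul_integral_chi_mul [IsFiniteMeasure μ]
    (hμ : IsBernoulli N μ) {f : SSp N → ℝ} (hf : Continuous f) :
    TendstoUniformly (fun m p => (N : ℝ) ^ (m + 1) * ∫ x, chi N m p x * f x ∂μ) f atTop := by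
  simp only [hμ.pow_mul_integral_chi_mul]
  have h := tendstoUniformly_setAverage_cylinder hμ.measure_cylinder_ne_zero hf
  exact fun u hu => (tendsto_add_atTop_nat 1).eventually (h u hu)

lemma IsBernoulli.integral_norm_levelGreen_mul_le [IsFiniteMeasure μ] (hμ : IsBernoulli N μ)
    {f : SSp N → ℝ} {C : ℝ} (hC : ∀ y, ‖f y‖ ≤ C) (k : ℕ) (x : SSp N) :
    ∫ y, ‖levelGreen N k x y * f y‖ ∂μ ≤ 2 / N * C * (N : ℝ)⁻¹ ^ (k + 1) := by
  have hsupp : ∀ y ∉ PiNat.cylinder x (k + 1), ‖levelGreen N k x y * f y‖ = 0 := fun y hy => by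
    rw [levelGreen_eq_zero_of_notMem_cylinder hy, zero_mul, norm_zero]
  have hbound : ∀ y ∈ PiNat.cylinder x (k + 1), ‖‖levelGreen N k x y * f y‖‖ ≤ 2 / N * C :=
    fun y _ => by
      rw [norm_norm]
      exact norm_mul_le_of_le (norm_levelGreen_le k x y) (hC y)
  rw [← setIntegral_eq_integral_of_forall_compl_eq_zero hsupp, ← hμ.measureReal_cylinder x]
  exact (Real.le_norm_self _).trans
    (norm_setIntegral_le_of_norm_le_const (measure_lt_top μ _) hbound)

lemma summable_const_mul_inv_pow_succ (hN : 2 ≤ N) (C : ℝ) :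
    Summable fun k : ℕ => C * (N : ℝ)⁻¹ ^ (k + 1) := by
  have hgeom : Summable fun k : ℕ => (N : ℝ)⁻¹ ^ k :=
    summable_geometric_of_lt_one (by positivity) (inv_lt_one_of_one_lt₀ (Nat.one_lt_cast.2 hN))
  exact ((summable_nat_add_iff 1).2 hgeom).mul_left C

lemma IsBernoulli.hasSum_levelGop [IsFiniteMeasure μ] (hμ : IsBernoulli N μ) (hN : 2 ≤ N)
    {f : SSp N → ℝ} (hf : Integrable f μ) {C : ℝ} (hC : ∀ y, ‖f y‖ ≤ C) (x : SSp N) :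
    HasSum (fun k => levelGop N μ k f x) (Gop N μ f x) := by
  have := hμ.nullSingletonClass hN
  rw [Gop_eq_integral_tsum]
  refine hasSum_integral_of_summable_integral_norm (integrable_levelGreen_mul hf · x) ?_
  exact (summable_const_mul_inv_pow_succ hN _).of_nonneg_of_le
    (fun k => integral_nonneg fun y => norm_nonneg _)
    (hμ.integral_norm_levelGreen_mul_le hC · x)

lemma IsBernoulli.continuous_Gop [IsFiniteMeasure μ] (hμ : IsBernoulli N μ) (hN : 2 ≤ N)
    {f : SSp N → ℝ} (hf : Integrable f μ) {C : ℝ} (hC : ∀ y, ‖f y‖ ≤ C) :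
    Continuous (Gop N μ f) := by
  have hGop : Gop N μ f = fun x => ∑' k, levelGop N μ k f x :=
    funext fun x => (hμ.hasSum_levelGop hN hf hC x).tsum_eq.symm
  rw [hGop]
  exact continuous_tsum (continuous_levelGop μ · f) (summable_const_mul_inv_pow_succ hN _)
    fun k x => (norm_integral_le_integral_norm _).trans
      (hμ.integral_norm_levelGreen_mul_le hC k x)

end Bernoulli

/-- for every continuous `f`:
(i) `G_μ f` vanishes on `V_0`;
(ii) for `n ≥ 1` and `p ∈ V_n ∖ V_{n−1}`, `H_n (G_μ f)(p) = −∫ χ_p^n f dμ`;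
(iii) `G_μ f ∈ D_μ` and `Δ(G_μ f) = −f`. -/
theorem statement15 (N : ℕ) (hN : 2 ≤ N)
    (μ : Measure (SSp N)) [IsProbabilityMeasure μ] (hμ : IsBernoulli N μ)
    (f : SSp N → ℝ) (hf : Continuous f) :
    (∀ p ∈ V N 0, Gop N μ f p = 0) ∧
    (∀ n : ℕ, 1 ≤ n → ∀ p ∈ V N n, p ∉ V N (n - 1) →
      H N n (Gop N μ f) p = -∫ x, chi N n p x * f x ∂μ) ∧
    IsLaplacianDmu N (Gop N μ f) (fun x => -f x) := by
  have := hμ.nullSingletonClass hN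
  have hint : Integrable f μ :=
    hf.integrable_of_hasCompactSupport (HasCompactSupport.of_compactSpace f)
  obtain ⟨C, hC⟩ := isCompact_univ.exists_bound_of_continuousOn hf.continuousOn
  refine ⟨fun p hp => Gop_eq_zero_of_mem_V_zero hint hp, fun n hn p hp hp' => ?_,
    hμ.continuous_Gop hN hint fun y => hC y (Set.mem_univ y), hf.neg, fun ε hε => ?_⟩
  · obtain ⟨k, rfl⟩ := Nat.exists_eq_succ_of_ne_zero (Nat.one_le_iff_ne_zero.1 hn)
    exact H_succ_Gop hint hp hp'
  · have hunif := Metric.tendstoUniformly_iff.1 (hμ.tendstoUniformly_pow_mul_integral_chi_mul hf)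
    obtain ⟨m₀, hm₀⟩ := eventually_atTop.1 (hunif ε hε)
    refine ⟨m₀, fun m hm p hp hp' => ?_⟩
    rw [H_succ_Gop hint hp hp', mul_neg, ← neg_sub', abs_neg, ← Real.dist_eq, dist_comm]
    exact hm₀ (m + 1) (hm.trans m.le_succ) p
end
end
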